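/- Let d ≥ 1, let H_B and H_R be finite-dimensional complex Hilbert spaces, let ψ ∈ ℂ^d ⊗ H_B ⊗ H_R be a unit vector, and let 0 ≤ ε ≤ 1. If there exists a POVM (Λ_z)_{z=0}^{d−1} on H_B whose guessing probability satisfies p_guess = ∑_z ⟨ψ| (|z⟩⟨z| ⊗ Λ_z ⊗ 1_R) |ψ⟩ ≥ 1 − ε, then the X-measurement outcome is √(2ε)-secure against R: p_secure(X^A|R) = D(ψ̄_X^{AR}, (1/d) 1_A ⊗ ψ^R) ≤ √(2ε). -/

import Mathlib

open Matrix BigOperators Finset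
open scoped Classical ComplexOrder

noncomputable section

/-- The positive semidefinite square root of a matrix (zero if the matrix is not PSD). -/
def psdSqrt {ι : Type*} [Fintype ι] [DecidableEq ι] (M : Matrix ι ι ℂ) : Matrix ι ι ℂ :=
  if h : M.PosSemidef then
    (h.1.eigenvectorUnitary : Matrix ι ι ℂ) *
      Matrix.diagonal ((RCLike.ofReal : ℝ → ℂ) ∘ Real.sqrt ∘ h.1.eigenvalues) *
      (star h.1.eigenvectorUnitary : Matrix ι ι ℂ)
  else 0

/-- Trace norm ‖M‖₁ = Tr √(M†M). -/
def traceNorm {ι : Type*} [Fintype ι] [DecidableEq ι] (M : Matrix ι ι ℂ) : ℝ :=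
  ((psdSqrt (Mᴴ * M)).trace).re

/-- Trace distance D(ρ,σ) = ‖ρ−σ‖₁/2. -/
def traceDist {ι : Type*} [Fintype ι] [DecidableEq ι] (ρ σ : Matrix ι ι ℂ) : ℝ :=
  traceNorm (ρ - σ) / 2

/-- Fidelity F(ρ,σ) = ‖√ρ√σ‖₁. -/
def fidelity {ι : Type*} [Fintype ι] [DecidableEq ι] (ρ σ : Matrix ι ι ℂ) : ℝ :=
  traceNorm (psdSqrt ρ * psdSqrt σ)

/-- ω = exp(2πi/d). -/
def omega (d : ℕ) : ℂ := Complex.exp (2 * Real.pi * Complex.I / d)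

/-- Conjugate (X) basis vector |x̃⟩ of ℂ^d, component at z: ω^{−xz}/√d. -/
def xVec (d : ℕ) (x z : Fin d) : ℂ :=
  (starRingEnd ℂ) (omega d ^ (x.val * z.val)) / (Real.sqrt d : ℂ)

/-- Component of (⟨x̃|⊗1_{BR})|ψ⟩. -/
def condVecX {d : ℕ} {β r : Type*} [Fintype β] [Fintype r]
    (ψ : Fin d × β × r → ℂ) (x : Fin d) (p : β × r) : ℂ :=
  ∑ z, (starRingEnd ℂ) (xVec d x z) * ψ (z, p.1, p.2)

/-- Unnormalized conditional state ϑ_x^R = Tr_B[(⟨x̃|⊗1)|ψ⟩⟨ψ|(|x̃⟩⊗1)]. -/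
def thetaR {d : ℕ} {β r : Type*} [Fintype β] [Fintype r]
    (ψ : Fin d × β × r → ℂ) (x : Fin d) : Matrix r r ℂ :=
  Matrix.of fun s s' => ∑ b, condVecX ψ x (b, s) * (starRingEnd ℂ) (condVecX ψ x (b, s'))

/-- X-measured cq marginal ψ̄_X^{AR} = ∑_x |x̃⟩⟨x̃| ⊗ ϑ_x^R. -/
def cqMarginalX {d : ℕ} {β r : Type*} [Fintype β] [Fintype r]
    (ψ : Fin d × β × r → ℂ) : Matrix (Fin d × r) (Fin d × r) ℂ :=
  Matrix.of fun p q =>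
    ∑ x, xVec d x p.1 * (starRingEnd ℂ) (xVec d x q.1) * thetaR ψ x p.2 q.2

/-- Reduced state ψ^R = Tr_{AB}|ψ⟩⟨ψ|. -/
def reducedR {α β r : Type*} [Fintype α] [Fintype β] [Fintype r]
    (ψ : α × β × r → ℂ) : Matrix r r ℂ :=
  Matrix.of fun s s' => ∑ z, ∑ b, ψ (z, b, s) * (starRingEnd ℂ) (ψ (z, b, s'))

/-- The ideal key state (1/d) 1_A ⊗ ψ^R. -/
def idealKey {d : ℕ} {β r : Type*} [Fintype β] [Fintype r]
    (ψ : Fin d × β × r → ℂ) : Matrix (Fin d × r) (Fin d × r) ℂ :=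
  Matrix.of fun p q => (if p.1 = q.1 then ((d : ℂ))⁻¹ else 0) * reducedR ψ p.2 q.2

/-- Security parameter p_secure(X^A|R) = D(ψ̄_X^{AR}, (1/d)1⊗ψ^R). -/
def pSecure {d : ℕ} {β r : Type*} [Fintype β] [DecidableEq β] [Fintype r] [DecidableEq r]
    (ψ : Fin d × β × r → ℂ) : ℝ :=
  traceDist (cqMarginalX ψ) (idealKey ψ)

/-- Guessing probability ∑_z ⟨ψ|(|z⟩⟨z| ⊗ Λ_z ⊗ 1_R)|ψ⟩. -/
def pGuess {d : ℕ} {β r : Type*} [Fintype β] [Fintype r]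
    (ψ : Fin d × β × r → ℂ) (Λ : Fin d → Matrix β β ℂ) : ℝ :=
  (∑ z, ∑ b, ∑ b', ∑ s, (starRingEnd ℂ) (ψ (z, b, s)) * Λ z b b' * ψ (z, b', s)).re

end

section HilbertSchmidt

variable {ι κ : Type*} [Fintype ι] [Fintype κ]

theorem trace_mul_conjTranspose_re (A : Matrix ι κ ℂ) :
    ((A * Aᴴ).trace).re = ∑ p : ι × κ, ‖A p.1 p.2‖ ^ 2 := by
  simp only [Matrix.trace, Matrix.diag_apply, Matrix.mul_apply, conjTranspose_apply,
    Fintype.sum_prod_type, Complex.re_sum]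
  refine sum_congr rfl fun i _ => sum_congr rfl fun j _ => ?_
  rw [RCLike.star_def, Complex.mul_conj, Complex.normSq_eq_norm_sq]
  exact Complex.ofReal_re _

/-- Cauchy–Schwarz for the Hilbert–Schmidt inner product. -/
theorem trace_mul_conjTranspose_re_le (A B : Matrix ι κ ℂ) :
    ((A * Bᴴ).trace).re ≤
      Real.sqrt ((A * Aᴴ).trace).re * Real.sqrt ((B * Bᴴ).trace).re := by
  rw [trace_mul_conjTranspose_re, trace_mul_conjTranspose_re]
  refine le_trans ?_ (Real.sum_mul_le_sqrt_mul_sqrt univ _ _)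
  simp only [Matrix.trace, Matrix.diag_apply, Matrix.mul_apply, conjTranspose_apply,
    Fintype.sum_prod_type, Complex.re_sum]
  refine sum_le_sum fun i _ => sum_le_sum fun j _ => ?_
  refine (Complex.re_le_norm _).trans (le_of_eq ?_)
  rw [norm_mul, norm_star]

end HilbertSchmidt

section Spectral

variable {ι κ : Type*} [Fintype ι] [DecidableEq ι] [Fintype κ]

theorem Matrix.IsHermitian.eq_mul_diagonal_mul_star {M : Matrix ι ι ℂ} (h : M.IsHermitian) :
    M = (h.eigenvectorUnitary : Matrix ι ι ℂ) *
      diagonal ((RCLike.ofReal : ℝ → ℂ) ∘ h.eigenvalues) *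
      (star h.eigenvectorUnitary : Matrix ι ι ℂ) := by
  conv_lhs => rw [h.spectral_theorem, Unitary.conjStarAlgAut_apply]

/-- Spectral functions of a fixed unitary frame multiply pointwise. -/
theorem conj_diagonal_mul_conj_diagonal (U : unitaryGroup ι ℂ) (f g : ι → ℂ) :
    ((U : Matrix ι ι ℂ) * diagonal f * (star U : Matrix ι ι ℂ)) *
      ((U : Matrix ι ι ℂ) * diagonal g * (star U : Matrix ι ι ℂ)) =
    (U : Matrix ι ι ℂ) * diagonal (f * g) * (star U : Matrix ι ι ℂ) := by
  have hU : (star U : Matrix ι ι ℂ) * (U : Matrix ι ι ℂ) = 1 := Unitary.coe_star_mul_self U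
  calc _ = (U : Matrix ι ι ℂ) * diagonal f * ((star U : Matrix ι ι ℂ) * (U : Matrix ι ι ℂ)) *
        diagonal g * (star U : Matrix ι ι ℂ) := by simp only [Matrix.mul_assoc]
    _ = _ := by
      rw [hU, Matrix.mul_one, Matrix.mul_assoc (U : Matrix ι ι ℂ), diagonal_mul_diagonal]
      rfl

theorem posSemidef_conj_diagonal (U : unitaryGroup ι ℂ) {f : ι → ℝ} (hf : ∀ i, 0 ≤ f i) :
    ((U : Matrix ι ι ℂ) * diagonal ((RCLike.ofReal : ℝ → ℂ) ∘ f) *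
      (star U : Matrix ι ι ℂ)).PosSemidef :=
  (PosSemidef.diagonal fun i => by simpa using hf i).mul_mul_conjTranspose_same
    (U : Matrix ι ι ℂ)

theorem psdSqrt_isHermitian (M : Matrix ι ι ℂ) : (psdSqrt M).IsHermitian := by
  unfold psdSqrt
  split_ifs with h
  · exact (posSemidef_conj_diagonal h.1.eigenvectorUnitary
      (f := Real.sqrt ∘ h.1.eigenvalues) fun i => Real.sqrt_nonneg _).1
  · exact isHermitian_zero

theorem psdSqrt_mul_self {M : Matrix ι ι ℂ} (h : M.PosSemidef) :
    psdSqrt M * psdSqrt M = M := by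
  conv_rhs => rw [h.1.eq_mul_diagonal_mul_star]
  rw [psdSqrt, dif_pos h, conj_diagonal_mul_conj_diagonal]
  congr 3
  funext i
  simp only [Pi.mul_apply, Function.comp_apply]
  rw [← RCLike.ofReal_mul, Real.mul_self_sqrt (h.eigenvalues_nonneg i)]

/-- For `0 ≤ M ≤ 1` the square root dominates `M`. -/
theorem posSemidef_psdSqrt_sub {M : Matrix ι ι ℂ} (h : M.PosSemidef)
    (h1 : (1 - M).PosSemidef) : (psdSqrt M - M).PosSemidef := by
  have hle : ∀ i, h.1.eigenvalues i ≤ 1 := fun i => by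
    have hp := h1.conjTranspose_mul_mul_same (h.1.eigenvectorUnitary : Matrix ι ι ℂ)
    have hU : (h.1.eigenvectorUnitary : Matrix ι ι ℂ)ᴴ *
        (h.1.eigenvectorUnitary : Matrix ι ι ℂ) = 1 :=
      Unitary.coe_star_mul_self h.1.eigenvectorUnitary
    have hD : (h.1.eigenvectorUnitary : Matrix ι ι ℂ)ᴴ * M *
        (h.1.eigenvectorUnitary : Matrix ι ι ℂ) =
        diagonal ((RCLike.ofReal : ℝ → ℂ) ∘ h.1.eigenvalues) := by
      have := h.1.conjStarAlgAut_star_eigenvectorUnitary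
      rwa [Unitary.conjStarAlgAut_star_apply] at this
    rw [Matrix.mul_sub, Matrix.sub_mul, hD, Matrix.mul_one, hU] at hp
    have := (Complex.le_def.1 (hp.diag_nonneg (i := i))).1
    simp at this
    linarith
  have key : psdSqrt M - M = (h.1.eigenvectorUnitary : Matrix ι ι ℂ) *
      diagonal ((RCLike.ofReal : ℝ → ℂ) ∘
        fun i => Real.sqrt (h.1.eigenvalues i) - h.1.eigenvalues i) *
      (star h.1.eigenvectorUnitary : Matrix ι ι ℂ) := by
    conv_lhs => arg 2; rw [h.1.eq_mul_diagonal_mul_star]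
    rw [psdSqrt, dif_pos h, ← Matrix.sub_mul, ← Matrix.mul_sub, diagonal_sub]
    congr 3
    funext i
    simp
  rw [key]
  refine posSemidef_conj_diagonal _ fun i => sub_nonneg.2 ?_
  exact Real.le_sqrt_of_sq_le (by nlinarith [hle i, h.eigenvalues_nonneg i])

/-- The trace norm is attained on a contraction. -/
theorem exists_contraction_traceNorm_eq (M : Matrix ι ι ℂ) :
    ∃ S : Matrix ι ι ℂ, (1 - S * Sᴴ).PosSemidef ∧ traceNorm M = ((S * M).trace).re := by
  have h : (Mᴴ * M).PosSemidef := posSemidef_conjTranspose_mul_self M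
  set U := h.1.eigenvectorUnitary
  set l := h.1.eigenvalues
  have hl0 : ∀ i, 0 ≤ l i := h.eigenvalues_nonneg
  have hM : Mᴴ * M = (U : Matrix ι ι ℂ) * diagonal ((RCLike.ofReal : ℝ → ℂ) ∘ l) *
      (star U : Matrix ι ι ℂ) := h.1.eq_mul_diagonal_mul_star
  set G := (U : Matrix ι ι ℂ) *
    diagonal ((RCLike.ofReal : ℝ → ℂ) ∘ fun i => (Real.sqrt (l i))⁻¹) *
    (star U : Matrix ι ι ℂ) with hG
  have hGH : Gᴴ = G :=
    (posSemidef_conj_diagonal U (f := fun i => (Real.sqrt (l i))⁻¹)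
      fun i => inv_nonneg.2 (Real.sqrt_nonneg _)).1
  refine ⟨G * Mᴴ, ?_, ?_⟩
  · have hone : (1 : Matrix ι ι ℂ) = (U : Matrix ι ι ℂ) *
        diagonal ((RCLike.ofReal : ℝ → ℂ) ∘ fun _ => 1) * (star U : Matrix ι ι ℂ) := by
      have : diagonal ((RCLike.ofReal : ℝ → ℂ) ∘ fun _ : ι => (1 : ℝ)) = 1 := by
        rw [← diagonal_one]
        exact congrArg diagonal (funext fun i => by simp)
      rw [this, Matrix.mul_one]
      exact (Unitary.coe_mul_star_self U).symm
    have hS : G * Mᴴ * (G * Mᴴ)ᴴ = (U : Matrix ι ι ℂ) *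
        diagonal ((RCLike.ofReal : ℝ → ℂ) ∘
          fun i => (Real.sqrt (l i))⁻¹ * l i * (Real.sqrt (l i))⁻¹) *
        (star U : Matrix ι ι ℂ) := by
      rw [conjTranspose_mul, conjTranspose_conjTranspose, hGH, Matrix.mul_assoc,
        ← Matrix.mul_assoc Mᴴ, ← Matrix.mul_assoc G, hM, hG, conj_diagonal_mul_conj_diagonal,
        conj_diagonal_mul_conj_diagonal]
      congr 3
      funext i
      simp
    rw [hS, hone, ← Matrix.sub_mul, ← Matrix.mul_sub, diagonal_sub]
    have := posSemidef_conj_diagonal U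
      (f := fun i => 1 - (Real.sqrt (l i))⁻¹ * l i * (Real.sqrt (l i))⁻¹) fun i => by
        have hs := Real.mul_self_sqrt (hl0 i)
        rcases eq_or_ne (Real.sqrt (l i)) 0 with h0 | h0
        · simp [h0]
        · rw [sub_nonneg]
          refine le_of_eq ?_
          nth_rw 2 [← hs]
          field_simp
    convert this using 3
    exact congrArg diagonal (funext fun i => by simp)
  · rw [Matrix.mul_assoc, hM, hG, conj_diagonal_mul_conj_diagonal, traceNorm, psdSqrt,
      dif_pos h]
    congr 5
    funext i
    simp only [Pi.mul_apply, Function.comp_apply]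
    rw [← RCLike.ofReal_mul]
    congr 1
    change Real.sqrt (l i) = (Real.sqrt (l i))⁻¹ * l i
    rcases eq_or_ne (Real.sqrt (l i)) 0 with h0 | h0
    · simp [h0]
    · nth_rw 3 [← Real.mul_self_sqrt (hl0 i)]
      field_simp

theorem contraction_trace_re_le {S : Matrix ι ι ℂ} (hS : (1 - S * Sᴴ).PosSemidef)
    (X Y : Matrix ι κ ℂ) :
    ((S * (X * Yᴴ)).trace).re ≤
      Real.sqrt ((X * Xᴴ).trace).re * Real.sqrt ((Y * Yᴴ).trace).re := by
  have h1 : (S * (X * Yᴴ)).trace = (X * (Sᴴ * Y)ᴴ).trace := by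
    rw [conjTranspose_mul, conjTranspose_conjTranspose, Matrix.trace_mul_comm, Matrix.mul_assoc]
  have h2 : (((Sᴴ * Y) * (Sᴴ * Y)ᴴ).trace).re ≤ ((Y * Yᴴ).trace).re := by
    have h0 := (Complex.le_def.1 (hS.conjTranspose_mul_mul_same Y).trace_nonneg).1
    rw [Matrix.mul_sub, Matrix.sub_mul, Matrix.mul_one, Matrix.trace_sub, Complex.sub_re,
      Matrix.trace_mul_comm Yᴴ Y] at h0
    have h3 : ((Sᴴ * Y) * (Sᴴ * Y)ᴴ).trace = (Yᴴ * (S * Sᴴ) * Y).trace := by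
      rw [Matrix.trace_mul_comm, conjTranspose_mul, conjTranspose_conjTranspose]
      simp only [Matrix.mul_assoc]
    rw [h3]
    simpa using h0
  rw [h1]
  refine (trace_mul_conjTranspose_re_le _ _).trans ?_
  gcongr

/-- Trace distance of two Gram matrices in terms of the Hilbert–Schmidt norms of the sum and the
difference of the factors. -/
theorem traceNorm_gram_sub_gram_le (A B : Matrix ι κ ℂ) :
    traceNorm (A * Aᴴ - B * Bᴴ) ≤
      Real.sqrt (((A - B) * (A - B)ᴴ).trace).re *
        Real.sqrt (((A + B) * (A + B)ᴴ).trace).re := by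
  obtain ⟨S, hS, hT⟩ := exists_contraction_traceNorm_eq (A * Aᴴ - B * Bᴴ)
  have h1 := contraction_trace_re_le hS (A - B) (A + B)
  have h2 := contraction_trace_re_le hS (A + B) (A - B)
  have h3 : S * (A * Aᴴ - B * Bᴴ) + S * (A * Aᴴ - B * Bᴴ) =
      S * ((A - B) * (A + B)ᴴ) + S * ((A + B) * (A - B)ᴴ) := by
    rw [← Matrix.mul_add, ← Matrix.mul_add]
    congr 1
    simp only [conjTranspose_add, conjTranspose_sub, Matrix.sub_mul, Matrix.add_mul,
      Matrix.mul_add, Matrix.mul_sub]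
    abel
  have h4 := congrArg (fun N : Matrix ι ι ℂ => N.trace.re) h3
  simp only [Matrix.trace_add, Complex.add_re] at h4
  rw [hT]
  linarith

end Spectral

section ConjugateBasis

variable {d : ℕ}

theorem omega_mul_conj (d : ℕ) : omega d * (starRingEnd ℂ) (omega d) = 1 := by
  have : ‖omega d‖ = 1 := by
    have h : (2 * Real.pi * Complex.I / d : ℂ) = ((2 * Real.pi / d : ℝ) : ℂ) * Complex.I := by
      push_cast
      ring
    rw [omega, h, Complex.norm_exp_ofReal_mul_I]
  rw [Complex.mul_conj, Complex.normSq_eq_norm_sq, this]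
  simp

theorem xVec_comm (x z : Fin d) : xVec d x z = xVec d z x := by
  rw [xVec, xVec, mul_comm x.val]

theorem xVec_mul_conj (x a b : Fin d) :
    xVec d x a * (starRingEnd ℂ) (xVec d x b) =
      ((starRingEnd ℂ) (omega d) ^ a.val * omega d ^ b.val) ^ x.val * (d : ℂ)⁻¹ := by
  have hs : (Real.sqrt d : ℂ) * (Real.sqrt d : ℂ) = d := by
    rw [← Complex.ofReal_mul, Real.mul_self_sqrt (Nat.cast_nonneg d)]
    simp
  simp only [xVec, map_div₀, Complex.conj_conj, Complex.conj_ofReal, map_pow]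
  rw [div_mul_div_comm, hs, div_eq_mul_inv, mul_pow, ← pow_mul, ← pow_mul,
    mul_comm a.val, mul_comm b.val]

theorem xVec_mul_conj_self (x a : Fin d) :
    xVec d x a * (starRingEnd ℂ) (xVec d x a) = (d : ℂ)⁻¹ := by
  rw [xVec_mul_conj, ← mul_pow, mul_comm _ (omega d), omega_mul_conj, one_pow, one_pow, one_mul]

theorem sum_xVec_mul_conj (hd : 1 ≤ d) (a b : Fin d) :
    ∑ x, xVec d x a * (starRingEnd ℂ) (xVec d x b) = if a = b then 1 else 0 := by
  have hd0 : (d : ℂ) ≠ 0 := by exact_mod_cast (by omega : d ≠ 0)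
  split_ifs with hab
  · subst hab
    simp [xVec_mul_conj_self, hd0]
  · have hprim : IsPrimitiveRoot (omega d) d := Complex.isPrimitiveRoot_exp d (by omega)
    set ζ := (starRingEnd ℂ) (omega d) ^ a.val * omega d ^ b.val with hζ
    have hζd : ζ ^ d = 1 := by
      rw [hζ, mul_pow, ← pow_mul, ← pow_mul, mul_comm a.val, mul_comm b.val, pow_mul, pow_mul,
        ← map_pow, hprim.pow_eq_one]
      simp
    have hζ1 : ζ ≠ 1 := fun h => hab <| by
      have h2 : omega d ^ a.val * ζ = omega d ^ b.val := by
        rw [hζ, ← mul_assoc, ← mul_pow, omega_mul_conj, one_pow, one_mul]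
      rw [h, mul_one] at h2
      exact Fin.ext (hprim.pow_inj a.2 b.2 h2)
    have hgeom : ∑ x : Fin d, ζ ^ x.val = 0 := by
      rw [Fin.sum_univ_eq_sum_range (fun i => ζ ^ i) d]
      have := geom_sum_mul ζ d
      rw [hζd, sub_self] at this
      exact (mul_eq_zero.1 this).resolve_right (sub_ne_zero.2 hζ1)
    simp only [xVec_mul_conj, ← sum_mul, ← hζ, hgeom, zero_mul]

/-- Parseval's identity for the conjugate basis. -/
theorem sum_conj_xVec_mul (hd : 1 ≤ d) (f g : Fin d → ℂ) :
    ∑ x, (∑ z, (starRingEnd ℂ) (xVec d x z) * f z) *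
      (starRingEnd ℂ) (∑ z, (starRingEnd ℂ) (xVec d x z) * g z) =
    ∑ z, f z * (starRingEnd ℂ) (g z) := by
  calc _ = ∑ z', ∑ z, (∑ x, xVec d x z' * (starRingEnd ℂ) (xVec d x z)) *
        (f z * (starRingEnd ℂ) (g z')) := by
        simp only [map_sum, map_mul, Complex.conj_conj, sum_mul, mul_sum]
        rw [sum_comm]
        refine sum_congr rfl fun z _ => ?_
        rw [sum_comm]
        exact sum_congr rfl fun z' _ => sum_congr rfl fun x _ => by ring
    _ = _ := by simp [sum_xVec_mul_conj hd]

end ConjugateBasis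

section Purification

variable {d : ℕ} {β γ r : Type*} [Fintype β] [Fintype γ]

/-- The factor whose Gram matrix is the `AR` marginal, after an `X` measurement on `A`, of a vector
with components `u z c s` on `A`, an environment `γ` and `R`. -/
noncomputable def xFactor (u : Fin d → γ → r → ℂ) : Matrix (Fin d × r) (Fin d × γ) ℂ :=
  Matrix.of fun p q => xVec d q.1 p.1 * ∑ z, (starRingEnd ℂ) (xVec d q.1 z) * u z q.2 p.2

theorem xFactor_mul_conjTranspose_apply (u w : Fin d → γ → r → ℂ) (p q : Fin d × r) :
    (xFactor u * (xFactor w)ᴴ) p q =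
      ∑ x, xVec d x p.1 * (starRingEnd ℂ) (xVec d x q.1) *
        ∑ c, (∑ z, (starRingEnd ℂ) (xVec d x z) * u z c p.2) *
          (starRingEnd ℂ) (∑ z, (starRingEnd ℂ) (xVec d x z) * w z c q.2) := by
  simp only [Matrix.mul_apply, conjTranspose_apply, xFactor, of_apply, Fintype.sum_prod_type,
    RCLike.star_def, map_mul, mul_sum (s := (univ : Finset γ))]
  exact sum_congr rfl fun x _ => sum_congr rfl fun c _ => by ring

variable [Fintype r]

theorem trace_xFactor_mul_conjTranspose (hd : 1 ≤ d) (u w : Fin d → γ → r → ℂ) :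
    (xFactor u * (xFactor w)ᴴ).trace =
      ∑ s, ∑ c, ∑ z, u z c s * (starRingEnd ℂ) (w z c s) := by
  have hnorm : ∀ x : Fin d, ∑ a, xVec d x a * (starRingEnd ℂ) (xVec d x a) = 1 := fun x => by
    simpa [xVec_comm x] using sum_xVec_mul_conj hd x x
  simp only [Matrix.trace, Matrix.diag_apply, xFactor_mul_conjTranspose_apply,
    Fintype.sum_prod_type]
  rw [sum_comm]
  refine sum_congr rfl fun s _ => ?_
  rw [sum_comm]
  simp only [← sum_mul, hnorm, one_mul]
  rw [sum_comm]
  exact sum_congr rfl fun c _ => sum_conj_xVec_mul hd _ _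

/-- A family of Hermitian matrices whose squares sum to one stacks to an isometry. -/
theorem sum_mulVec_mul_conj_mulVec [DecidableEq β] {α : Type*} [Fintype α]
    {T : α → Matrix β β ℂ} (hT : ∀ c, (T c).IsHermitian) (hsum : ∑ c, T c * T c = 1)
    (f g : β → ℂ) :
    ∑ q : α × β, (T q.1 *ᵥ f) q.2 * (starRingEnd ℂ) ((T q.1 *ᵥ g) q.2) =
      ∑ b, f b * (starRingEnd ℂ) (g b) := by
  have hc : ∀ c, ∑ b, (T c *ᵥ f) b * (starRingEnd ℂ) ((T c *ᵥ g) b) =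
      star g ⬝ᵥ ((T c * T c) *ᵥ f) := fun c => by
    change (T c *ᵥ f) ⬝ᵥ star (T c *ᵥ g) = _
    rw [star_mulVec, (hT c).eq, dotProduct_comm, ← dotProduct_mulVec, mulVec_mulVec]
  rw [Fintype.sum_prod_type]
  simp only [hc]
  rw [← dotProduct_sum, ← sum_mulVec, hsum, one_mulVec, dotProduct_comm]
  rfl

/-- The vector obtained from `ψ` by coherently applying the operators `T c` to `B`. -/
noncomputable def coherentMeasure (T : Fin d → Matrix β β ℂ) (ψ : Fin d × β × r → ℂ) :
    Fin d → Fin d × β → r → ℂ :=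
  fun z q s => (T q.1 *ᵥ fun b => ψ (z, b, s)) q.2

/-- The vector obtained from `ψ` by coherently copying the `Z` value of `A`. -/
noncomputable def coherentCopy (ψ : Fin d × β × r → ℂ) : Fin d → Fin d × β → r → ℂ :=
  fun z q s => if z = q.1 then ψ (z, q.2, s) else 0

theorem xFactor_coherentMeasure_gram [DecidableEq β] {T : Fin d → Matrix β β ℂ}
    (hT : ∀ c, (T c).IsHermitian) (hsum : ∑ c, T c * T c = 1) (ψ : Fin d × β × r → ℂ) :
    xFactor (coherentMeasure T ψ) * (xFactor (coherentMeasure T ψ))ᴴ = cqMarginalX ψ := by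
  ext p q
  rw [xFactor_mul_conjTranspose_apply]
  simp only [cqMarginalX, thetaR, of_apply]
  refine sum_congr rfl fun x _ => congrArg _ ?_
  have hlin : ∀ (e : Fin d × β) (s : r),
      ∑ z, (starRingEnd ℂ) (xVec d x z) * coherentMeasure T ψ z e s =
        (T e.1 *ᵥ fun b => condVecX ψ x (b, s)) e.2 := fun e s => by
    simp only [coherentMeasure, condVecX, mulVec, dotProduct, mul_sum]
    rw [sum_comm]
    exact sum_congr rfl fun b _ => sum_congr rfl fun z _ => by ring
  simp only [hlin]
  exact sum_mulVec_mul_conj_mulVec hT hsum _ _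

theorem xFactor_coherentCopy_gram (hd : 1 ≤ d) (ψ : Fin d × β × r → ℂ) :
    xFactor (coherentCopy ψ) * (xFactor (coherentCopy ψ))ᴴ = idealKey ψ := by
  ext p q
  rw [xFactor_mul_conjTranspose_apply]
  have hin : ∀ x : Fin d,
      ∑ c, (∑ z, (starRingEnd ℂ) (xVec d x z) * coherentCopy ψ z c p.2) *
        (starRingEnd ℂ) (∑ z, (starRingEnd ℂ) (xVec d x z) * coherentCopy ψ z c q.2) =
      (d : ℂ)⁻¹ * reducedR ψ p.2 q.2 := fun x => by
    simp only [coherentCopy, mul_ite, mul_zero, sum_ite_eq', mem_univ, if_true, reducedR,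
      of_apply, Fintype.sum_prod_type, mul_sum, map_mul, Complex.conj_conj]
    refine sum_congr rfl fun c _ => sum_congr rfl fun b _ => ?_
    rw [← xVec_mul_conj_self x c]
    ring
  simp only [hin, ← sum_mul, sum_xVec_mul_conj hd, idealKey, of_apply]
  split_ifs <;> simp

theorem sum_mul_conj_self_eq_one {ψ : Fin d × β × r → ℂ} (hψ : ∑ t, ‖ψ t‖ ^ 2 = 1) :
    ∑ s, ∑ z, ∑ b, ψ (z, b, s) * (starRingEnd ℂ) (ψ (z, b, s)) = 1 := by
  have h : ∑ t, ψ t * (starRingEnd ℂ) (ψ t) = 1 := by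
    simp only [Complex.mul_conj, Complex.normSq_eq_norm_sq]
    rw [← Complex.ofReal_sum, hψ, Complex.ofReal_one]
  rw [← h]
  simp only [Fintype.sum_prod_type]
  rw [sum_comm]
  exact sum_congr rfl fun z _ => sum_comm

theorem trace_coherentMeasure_gram [DecidableEq β] (hd : 1 ≤ d) {T : Fin d → Matrix β β ℂ}
    (hT : ∀ c, (T c).IsHermitian) (hsum : ∑ c, T c * T c = 1)
    {ψ : Fin d × β × r → ℂ} (hψ : ∑ t, ‖ψ t‖ ^ 2 = 1) :
    (xFactor (coherentMeasure T ψ) * (xFactor (coherentMeasure T ψ))ᴴ).trace = 1 := by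
  rw [trace_xFactor_mul_conjTranspose hd, ← sum_mul_conj_self_eq_one hψ]
  refine sum_congr rfl fun s _ => ?_
  rw [sum_comm]
  exact sum_congr rfl fun z _ => sum_mulVec_mul_conj_mulVec hT hsum _ _

theorem trace_coherentCopy_gram (hd : 1 ≤ d)
    {ψ : Fin d × β × r → ℂ} (hψ : ∑ t, ‖ψ t‖ ^ 2 = 1) :
    (xFactor (coherentCopy ψ) * (xFactor (coherentCopy ψ))ᴴ).trace = 1 := by
  rw [trace_xFactor_mul_conjTranspose hd, ← sum_mul_conj_self_eq_one hψ]
  refine sum_congr rfl fun s _ => ?_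
  simp [Fintype.sum_prod_type, coherentCopy]

theorem trace_coherentMeasure_mul_coherentCopy (hd : 1 ≤ d) (T : Fin d → Matrix β β ℂ)
    (ψ : Fin d × β × r → ℂ) :
    (xFactor (coherentMeasure T ψ) * (xFactor (coherentCopy ψ))ᴴ).trace =
      ∑ s, ∑ z, star (fun b => ψ (z, b, s)) ⬝ᵥ (T z *ᵥ fun b => ψ (z, b, s)) := by
  rw [trace_xFactor_mul_conjTranspose hd]
  refine sum_congr rfl fun s _ => ?_
  rw [Fintype.sum_prod_type]
  refine sum_congr rfl fun c _ => sum_congr rfl fun b _ => ?_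
  simp [coherentCopy, coherentMeasure, apply_ite, mul_comm]

theorem pGuess_eq_sum_dotProduct (ψ : Fin d × β × r → ℂ) (Λ : Fin d → Matrix β β ℂ) :
    pGuess ψ Λ =
      (∑ s, ∑ z, star (fun b => ψ (z, b, s)) ⬝ᵥ (Λ z *ᵥ fun b => ψ (z, b, s))).re := by
  rw [pGuess, sum_comm (s := (univ : Finset r))]
  refine congrArg Complex.re (sum_congr rfl fun z _ => ?_)
  simp only [dotProduct, mulVec, mul_sum, Pi.star_apply, RCLike.star_def, mul_assoc]
  rw [sum_comm (s := (univ : Finset r))]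
  exact sum_congr rfl fun b _ => sum_comm

end Purification

/-- ε-recoverability of Z^A from B implies √(2ε)-security of X^A against R. -/
theorem recoverable_implies_secure {d : ℕ} (hd : 1 ≤ d)
    {β r : Type*} [Fintype β] [DecidableEq β] [Fintype r] [DecidableEq r]
    (ψ : Fin d × β × r → ℂ) (hψ : ∑ t, ‖ψ t‖ ^ 2 = 1)
    (ε : ℝ) (hε0 : 0 ≤ ε) (hε1 : ε ≤ 1)
    (Λ : Fin d → Matrix β β ℂ)
    (hΛpos : ∀ z, (Λ z).PosSemidef) (hΛsum : ∑ z, Λ z = 1)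
    (hguess : 1 - ε ≤ pGuess ψ Λ) :
    pSecure ψ ≤ Real.sqrt (2 * ε) := by
  set T : Fin d → Matrix β β ℂ := fun z => psdSqrt (Λ z)
  have hT : ∀ z, (T z).IsHermitian := fun z => psdSqrt_isHermitian _
  have hTsum : ∑ z, T z * T z = 1 := by
    rw [← hΛsum]
    exact sum_congr rfl fun z _ => psdSqrt_mul_self (hΛpos z)
  have hTΛ : ∀ z, (T z - Λ z).PosSemidef := fun z => by
    refine posSemidef_psdSqrt_sub (hΛpos z) ?_
    rw [← hΛsum, ← add_sum_erase univ Λ (mem_univ z), add_sub_cancel_left]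
    exact posSemidef_sum _ fun i _ => hΛpos i
  set A := xFactor (coherentMeasure T ψ)
  set B := xFactor (coherentCopy ψ)
  have hA : (A * Aᴴ).trace = 1 := trace_coherentMeasure_gram hd hT hTsum hψ
  have hB : (B * Bᴴ).trace = 1 := trace_coherentCopy_gram hd hψ
  have hAB : 1 - ε ≤ ((A * Bᴴ).trace).re := by
    refine hguess.trans ?_
    rw [pGuess_eq_sum_dotProduct, trace_coherentMeasure_mul_coherentCopy hd]
    simp only [Complex.re_sum]
    refine sum_le_sum fun s _ => sum_le_sum fun z _ => ?_
    have h := (Complex.le_def.1 ((hTΛ z).dotProduct_mulVec_nonneg fun b => ψ (z, b, s))).1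
    rw [sub_mulVec, dotProduct_sub, Complex.sub_re, Complex.zero_re] at h
    linarith
  have hBA : ((B * Aᴴ).trace).re = ((A * Bᴴ).trace).re := by
    rw [← conjTranspose_conjTranspose B, ← conjTranspose_mul, trace_conjTranspose,
      conjTranspose_conjTranspose]
    simp
  have hsub : (((A - B) * (A - B)ᴴ).trace).re = 2 - 2 * ((A * Bᴴ).trace).re := by
    simp only [conjTranspose_sub, Matrix.sub_mul, Matrix.mul_sub, Matrix.trace_sub,
      Complex.sub_re, hA, hB, hBA, Complex.one_re]
    ring
  have hadd : (((A + B) * (A + B)ᴴ).trace).re = 2 + 2 * ((A * Bᴴ).trace).re := by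
    simp only [conjTranspose_add, Matrix.add_mul, Matrix.mul_add, Matrix.trace_add,
      Complex.add_re, hA, hB, hBA, Complex.one_re]
    ring
  have hsub0 : 0 ≤ (((A - B) * (A - B)ᴴ).trace).re := by
    rw [trace_mul_conjTranspose_re]
    positivity
  have hmain := traceNorm_gram_sub_gram_le A B
  have h1 : Real.sqrt (((A - B) * (A - B)ᴴ).trace).re ≤ Real.sqrt (2 * ε) :=
    Real.sqrt_le_sqrt (by linarith)
  have h2 : Real.sqrt (((A + B) * (A + B)ᴴ).trace).re ≤ 2 :=
    Real.sqrt_le_iff.2 ⟨by norm_num, by linarith⟩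
  have h3 := hmain.trans (mul_le_mul h1 h2 (Real.sqrt_nonneg _) (Real.sqrt_nonneg _))
  rw [xFactor_coherentMeasure_gram hT hTsum, xFactor_coherentCopy_gram hd] at h3
  rw [pSecure, traceDist]
  linarith
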